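/- arXiv:2210.12405 — 2 statements merged into one kernel-verified Lean document; each statement's English description precedes it below -/
import Mathlib

section
/- Let A be a d-dimensional extremal (0,1)-matrix of order 2 that admits an optimal hyperplane cover whose positive entries take at most two distinct values (i.e., A has diversity at most 2). Then: the deficiency of A equals 1/q for some positive integer q; the optimal hyperplane cover of A is unique; and every entry of the optimal hyperplane cover of A is an integer multiple of the deficiency of A. -/
open Finset

/-- The sum of the entries of `k` over the hyperplane `Γ_{i,j}`. -/
def hypSum {d n : ℕ} (k : (Fin d → Fin n) → ℝ) (i : Fin d) (j : Fin n) : ℝ :=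
  ∑ α ∈ Finset.univ.filter (fun α : Fin d → Fin n => α i = j), k α

/-- `k` is a polyplex of weight `W` in the `d`-dimensional (0,1)-matrix `A` of order `n`. -/
def IsPolyplex {d n : ℕ} (A : (Fin d → Fin n) → Bool) (k : (Fin d → Fin n) → ℝ) (W : ℝ) : Prop :=
  (∀ α, 0 ≤ k α) ∧ (∀ α, A α = false → k α = 0) ∧
  (∀ i j, hypSum k i j ≤ 1) ∧ (∑ α, k α) = W

/-- `k` is a polydiagonal in `A`: a nonnegative weighting of the support whose sum over
every hyperplane equals `1`. -/
def IsPolydiagonal {d n : ℕ} (A : (Fin d → Fin n) → Bool) (k : (Fin d → Fin n) → ℝ) : Prop :=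
  (∀ α, 0 ≤ k α) ∧ (∀ α, A α = false → k α = 0) ∧ (∀ i j, hypSum k i j = 1)

def HasPolydiagonal {d n : ℕ} (A : (Fin d → Fin n) → Bool) : Prop :=
  ∃ k, IsPolydiagonal A k

/-- The matrix obtained from `A` by additionally setting the entry at `β` to `1`. -/
def addEntry {d n : ℕ} (A : (Fin d → Fin n) → Bool) (β : Fin d → Fin n) :
    (Fin d → Fin n) → Bool :=
  fun α => if α = β then true else A α

/-- `A` is extremal: it has no polydiagonal, and adding any entry creates one. -/
def IsExtremal {d n : ℕ} (A : (Fin d → Fin n) → Bool) : Prop :=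
  ¬ HasPolydiagonal A ∧ ∀ β, A β = false → HasPolydiagonal (addEntry A β)

/-- `Λ` is a hyperplane cover of `A`. -/
def IsCover {d n : ℕ} (A : (Fin d → Fin n) → Bool) (Λ : Fin d → Fin n → ℝ) : Prop :=
  (∀ i j, 0 ≤ Λ i j) ∧ ∀ α, A α = true → 1 ≤ ∑ i, Λ i (α i)

/-- The weight of a hyperplane cover. -/
def coverWeight {d n : ℕ} (Λ : Fin d → Fin n → ℝ) : ℝ := ∑ i, ∑ j, Λ i j

/-- `Λ` is an optimal hyperplane cover of `A`: a cover of minimum weight. -/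
def IsOptimalCover {d n : ℕ} (A : (Fin d → Fin n) → Bool) (Λ : Fin d → Fin n → ℝ) : Prop :=
  IsCover A Λ ∧ ∀ Λ', IsCover A Λ' → coverWeight Λ ≤ coverWeight Λ'

/-- `A` is a threshold matrix. -/
def IsThreshold {d n : ℕ} (A : (Fin d → Fin n) → Bool) : Prop :=
  ∃ Λ : Fin d → Fin n → ℝ, (∀ i j, 0 ≤ Λ i j) ∧
    ∀ α, (A α = true ↔ 1 ≤ ∑ i, Λ i (α i))

/-- `A` and `B` are equivalent: `B` is obtained from `A` by permuting directions and
permuting parallel hyperplanes, i.e. `B(α) = A(β)` where `β (π i) = σ i (α i)`. -/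
def MatEquiv {d n : ℕ} (A B : (Fin d → Fin n) → Bool) : Prop :=
  ∃ (π : Equiv.Perm (Fin d)) (σ : Fin d → Equiv.Perm (Fin n)),
    ∀ α, B α = A (fun j => σ (π.symm j) (α (π.symm j)))

/-- The rate of the hyperplane `Γ_{i,j}` of `A`: the number of ones it contains. -/
def rate {d n : ℕ} (A : (Fin d → Fin n) → Bool) (i : Fin d) (j : Fin n) : ℕ :=
  (Finset.univ.filter (fun α : Fin d → Fin n => A α = true ∧ α i = j)).card

/-- The profile of `A`: the multiset of the rates of all its `d·n` hyperplanes. -/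
def profile {d n : ℕ} (A : (Fin d → Fin n) → Bool) : Multiset ℕ :=
  (Finset.univ : Finset (Fin d × Fin n)).val.map (fun p => rate A p.1 p.2)


set_option linter.unusedSectionVars false

/-- An empty-parallelogram argument. -/
lemma num_gap (n1 n2 x1 y1 u v m : ℤ) (hu : 0 < u) (hv : 0 < v) (hcop : IsCoprime u v)
    (hx0 : u ≤ x1) (hx1 : x1 ≤ n1) (hy0 : 0 ≤ y1) (hy1 : y1 + v ≤ n2)
    (hm : m = (2 * x1 - n1) * v + (2 * y1 - n2) * u) (hm2 : 2 ≤ m) :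
    ∃ x y : ℤ, 0 ≤ x ∧ x ≤ n1 ∧ 0 ≤ y ∧ y ≤ n2 ∧
      (2 * x - n1) * v + (2 * y - n2) * u = m - 2 := by
  obtain ⟨e, c, hec⟩ := hcop
  -- e * u + c * v = 1
  set X : ℤ := (m - 2) * x1 + u + n1 with hX
  set x0 : ℤ := x1 - c with hx0'
  set t : ℤ := (X - m * x0) / (m * u) with ht
  have hmu : 0 < m * u := by positivity
  have h1 : m * u * t ≤ X - m * x0 := Int.mul_ediv_self_le hmu.ne'
  have h2 : X - m * x0 < m * u * t + m * u := by
    have := Int.lt_mul_ediv_self_add (x := X - m * x0) hmu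
    exact this
  refine ⟨x0 + u * t, y1 - e - v * t, ?_, ?_, ?_, ?_, ?_⟩
  · have : 0 < m * (x0 + u * t + 0) + 1 := by
      have : 0 ≤ (m - 2) * (x1 - u) := mul_nonneg (by linarith) (by linarith)
      nlinarith
    by_contra hneg
    push Not at hneg
    nlinarith
  · have h3 : (m - 2) * x1 ≤ (m - 2) * n1 := mul_le_mul_of_nonneg_left hx1 (by linarith)
    have : m * (x0 + u * t) ≤ m * n1 := by nlinarith
    exact le_of_mul_le_mul_left this (by linarith)
  · have key : m * u * (y1 - e - v * t) = v * (m * (x1 - (x0 + u * t))) + m * u * y1 - m := by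
      rw [hx0']; linear_combination (-m) * hec
    have h3 : v * (2 * x1 - u - n1) ≤ v * (m * (x1 - (x0 + u * t))) :=
      mul_le_mul_of_nonneg_left (by nlinarith) hv.le
    have h4 : 0 ≤ (m - 2) * y1 + (n2 - v) := by
      have : 0 ≤ (m - 2) * y1 := mul_nonneg (by linarith) hy0
      linarith
    have h5 : u * ((m - 2) * y1 + (n2 - v)) ≤ m * u * (y1 - e - v * t) := by
      rw [key]; nlinarith
    have h6 : 0 ≤ m * u * (y1 - e - v * t) := le_trans (mul_nonneg hu.le h4) h5
    exact nonneg_of_mul_nonneg_right h6 hmu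
  · have key : m * u * (y1 - e - v * t) = v * (m * (x1 - (x0 + u * t))) + m * u * y1 - m := by
      rw [hx0']; linear_combination (-m) * hec
    have h3 : v * (m * (x1 - (x0 + u * t))) ≤ v * (2 * x1 - u - n1 + m * u) :=
      mul_le_mul_of_nonneg_left (by nlinarith) hv.le
    have h4 : (m - 2) * (y1 + v) + n2 + v ≤ m * n2 := by
      have : (m - 2) * (y1 + v) ≤ (m - 2) * n2 := mul_le_mul_of_nonneg_left hy1 (by linarith)
      linarith
    have h5 : m * u * (y1 - e - v * t) ≤ u * ((m - 2) * (y1 + v) + n2 + v) := by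
      rw [key]; nlinarith
    have h6 : m * u * (y1 - e - v * t) ≤ m * u * n2 := by
      refine h5.trans ?_
      nlinarith [mul_le_mul_of_nonneg_left h4 hu.le]
    exact le_of_mul_le_mul_left h6 hmu
  · rw [hm, hx0']; linear_combination (-2) * hec

lemma num_main (n1 n2 : ℤ) (a b : ℝ) (ha : 0 < a) (hb : 0 < b)
    (box : ∀ x y : ℤ, 0 ≤ x → x ≤ n1 → 0 ≤ y → y ≤ n2 →
      1 ≤ (2 * x - n1) * a + (2 * y - n2) * b ∨ (2 * x - n1) * a + (2 * y - n2) * b ≤ -1)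
    (x1 y1 x2 y2 : ℤ) (hx1 : 0 ≤ x1 ∧ x1 ≤ n1) (hy1 : 0 ≤ y1 ∧ y1 ≤ n2)
    (hx2 : 0 ≤ x2 ∧ x2 ≤ n1) (hy2 : 0 ≤ y2 ∧ y2 ≤ n2)
    (hP1 : (2 * x1 - n1) * a + (2 * y1 - n2) * b = 1) (hp1 : 0 < 2 * x1 - n1)
    (hP2 : (2 * x2 - n1) * a + (2 * y2 - n2) * b = 1) (hr2 : 0 < 2 * y2 - n2) :
    (∃ m : ℤ, a = m) ∧ (∃ m : ℤ, b = m) ∧ 2 * y1 - n2 ≤ 0 ∧ 2 * x2 - n1 ≤ 0 ∧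
    (∃ x y : ℤ, 0 ≤ x ∧ x ≤ n1 ∧ 0 ≤ y ∧ y ≤ n2 ∧
      (2 * x - n1) * a + (2 * y - n2) * b = 1 ∧ (n1 = 1 ∨ 0 < x ∧ x < n1)) ∧
    (∃ x y : ℤ, 0 ≤ x ∧ x ≤ n1 ∧ 0 ≤ y ∧ y ≤ n2 ∧
      (2 * x - n1) * a + (2 * y - n2) * b = 1 ∧ (n2 = 1 ∨ 0 < y ∧ y < n2)) := by
  have ha1 : 1 ≤ a := by
    rcases box (x1 - 1) y1 (by omega) (by omega) hy1.1 hy1.2 with h | h <;> push_cast at h <;>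
      linarith
  have hb1 : 1 ≤ b := by
    rcases box x2 (y2 - 1) hx2.1 hx2.2 (by omega) (by omega) with h | h <;> push_cast at h <;>
      linarith
  have two : ∀ p r : ℤ, 0 < p → 0 < r → (p : ℝ) * a + r * b ≠ 1 := by
    intro p r hp hr h
    have h1 : (1 : ℝ) ≤ p := by exact_mod_cast hp
    have h2 : (1 : ℝ) ≤ r := by exact_mod_cast hr
    nlinarith
  have hr1 : 2 * y1 - n2 ≤ 0 := by
    by_contra h
    push Not at h
    exact two _ _ hp1 h (by push_cast; exact hP1)
  have hp2 : 2 * x2 - n1 ≤ 0 := by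
    by_contra h
    push Not at h
    exact two _ _ h hr2 (by push_cast; exact hP2)
  have hU : 0 < x1 - x2 := by omega
  have hV : 0 < y2 - y1 := by omega
  obtain ⟨g, u, v, hg, hcop, hgu, hgv⟩ : ∃ g u v : ℤ, 0 < g ∧ IsCoprime u v ∧
      x1 - x2 = g * u ∧ y2 - y1 = g * v := by
    have hgpos : 0 < Int.gcd (x1 - x2) (y2 - y1) := Int.gcd_pos_of_ne_zero_left _ hU.ne'
    obtain ⟨u, v, hc, h1, h2⟩ := Int.exists_gcd_one hgpos
    exact ⟨((Int.gcd (x1 - x2) (y2 - y1) : ℕ) : ℤ), u, v, by exact_mod_cast hgpos, Int.isCoprime_iff_gcd_eq_one.mpr hc,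
      by rw [mul_comm]; exact h1, by rw [mul_comm]; exact h2⟩
  have hu : 0 < u := by
    rw [hgu] at hU; exact (pos_iff_pos_of_mul_pos hU).1 hg
  have hv : 0 < v := by
    rw [hgv] at hV; exact (pos_iff_pos_of_mul_pos hV).1 hg
  have huU : u ≤ x1 - x2 := by nlinarith
  have hvV : v ≤ y2 - y1 := by nlinarith
  have huR : (0 : ℝ) < u := by exact_mod_cast hu
  have hvR : (0 : ℝ) < v := by exact_mod_cast hv
  have huv : u * a = v * b := by
    have hgR : (0 : ℝ) < g := by exact_mod_cast hg
    have e1 : (x1 : ℝ) - x2 = g * u := by exact_mod_cast hgu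
    have e2 : (y2 : ℝ) - y1 = g * v := by exact_mod_cast hgv
    have : (g : ℝ) * (u * a) = g * (v * b) := by
      rw [← mul_assoc, ← mul_assoc, ← e1, ← e2]; linarith
    exact mul_left_cancel₀ hgR.ne' this
  obtain ⟨l, hl⟩ : ∃ l : ℝ, l = a / v := ⟨_, rfl⟩
  have hla : a = l * v := by rw [hl]; field_simp
  have hlb : b = l * u := by
    have : v * b = v * (l * u) := by rw [← huv, hla]; ring
    exact mul_left_cancel₀ hvR.ne' this
  have hlpos : 0 < l := by rw [hl]; positivity
  set m : ℤ := (2 * x1 - n1) * v + (2 * y1 - n2) * u with hm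
  have hlm : l * m = 1 := by
    rw [← hP1, hm, hla, hlb]; push_cast; ring
  have hmpos : 0 < m := by
    have : (0 : ℝ) < m := by
      by_contra h
      push Not at h
      nlinarith
    exact_mod_cast this
  have hm1 : m = 1 := by
    by_contra hne
    obtain ⟨x, y, h1, h2, h3, h4, h5⟩ := num_gap n1 n2 x1 y1 u v m hu hv hcop (by omega)
      (by omega) (by omega) (by omega) hm (by omega)
    have h5R : (2 * (x : ℝ) - n1) * v + (2 * y - n2) * u = m - 2 := by exact_mod_cast h5
    have h6 : (2 * (x : ℝ) - n1) * a + (2 * y - n2) * b = 1 - 2 * l := by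
      rw [hla, hlb]; linear_combination l * h5R + hlm
    have hm2 : (2 : ℝ) ≤ m := by
      have : 2 ≤ m := by omega
      exact_mod_cast this
    rcases box x y h1 h2 h3 h4 with h | h
    · linarith
    · nlinarith
  have hl1 : l = 1 := by rw [hm1] at hlm; simpa using hlm
  have hav : a = v := by rw [hla, hl1, one_mul]
  have hbu : b = u := by rw [hlb, hl1, one_mul]
  have hQ : (2 * ((x1 - u : ℤ) : ℝ) - n1) * a + (2 * ((y1 + v : ℤ) : ℝ) - n2) * b = 1 := by
    push_cast; linarith
  refine ⟨⟨v, hav⟩, ⟨u, hbu⟩, hr1, hp2, ?_, ?_⟩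
  · by_cases hc : x1 < n1
    · exact ⟨x1, y1, hx1.1, hx1.2, hy1.1, hy1.2, hP1, Or.inr ⟨by omega, hc⟩⟩
    by_cases hc2 : 0 < x1 - u
    · exact ⟨x1 - u, y1 + v, by omega, by omega, by omega, by omega, hQ,
        Or.inr ⟨by omega, by omega⟩⟩
    refine ⟨x1, y1, hx1.1, hx1.2, hy1.1, hy1.2, hP1, Or.inl ?_⟩
    have e1 : x1 = n1 := by omega
    have e2 : u = n1 := by omega
    have : n1 ∣ 1 := ⟨v + (2 * y1 - n2), by rw [← hm1, hm, e1, e2]; ring⟩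
    exact Int.eq_one_of_dvd_one (by omega) this
  · by_cases hc : 0 < y1
    · exact ⟨x1, y1, hx1.1, hx1.2, hy1.1, hy1.2, hP1, Or.inr ⟨hc, by omega⟩⟩
    by_cases hc2 : y1 + v < n2
    · exact ⟨x1 - u, y1 + v, by omega, by omega, by omega, by omega, hQ,
        Or.inr ⟨by omega, by omega⟩⟩
    refine ⟨x1, y1, hx1.1, hx1.2, hy1.1, hy1.2, hP1, Or.inl ?_⟩
    have e1 : y1 = 0 := by omega
    have e2 : v = n2 := by omega
    have : n2 ∣ 1 := ⟨(2 * x1 - n1) - u, by rw [← hm1, hm, e1, e2]; ring⟩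
    exact Int.eq_one_of_dvd_one (by omega) this

/-- Signed sum: `+` on `S`, `-` off `S`. -/
noncomputable def sval {ι : Type*} [Fintype ι] (w : ι → ℝ) (S : Finset ι) : ℝ :=
  2 * ∑ i ∈ S, w i - ∑ i, w i

lemma real_cone {a b N1 N2 p1 r1 p2 r2 U V ζ : ℝ} (ha : 0 < a) (hN1 : 0 < N1) (hN2 : 0 < N2)
    (hp1 : 0 < p1) (hr1 : r1 ≤ 0) (hp2 : p2 ≤ 0) (hr2 : 0 < r2)
    (h1 : p1 * a + r1 * b = 1) (h2 : p2 * a + r2 * b = 1)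
    (k1 : ζ ≤ p1 * U + r1 * V) (k2 : ζ ≤ p2 * U + r2 * V)
    (hd : N1 * U + N2 * V + ζ ≤ 0) (hζ : 0 ≤ ζ) : U = 0 ∧ V = 0 ∧ ζ = 0 := by
  have hdet : 0 < p1 * r2 - p2 * r1 := by
    have : (p1 * r2 - p2 * r1) * a = r2 - r1 := by linear_combination r2 * h1 - r1 * h2
    have h3 : 0 < (p1 * r2 - p2 * r1) * a := by rw [this]; linarith
    exact pos_of_mul_pos_left h3 ha.le
  have hU : 0 ≤ U := by
    have h3 : 0 ≤ (p1 * r2 - p2 * r1) * U := by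
      nlinarith [mul_le_mul_of_nonneg_left k1 hr2.le,
        mul_le_mul_of_nonneg_left k2 (neg_nonneg.2 hr1), mul_nonneg hr2.le hζ,
        mul_nonneg (neg_nonneg.2 hr1) hζ]
    exact nonneg_of_mul_nonneg_right h3 hdet
  have hV : 0 ≤ V := by
    have h3 : 0 ≤ (p1 * r2 - p2 * r1) * V := by
      nlinarith [mul_le_mul_of_nonneg_left k2 hp1.le,
        mul_le_mul_of_nonneg_left k1 (neg_nonneg.2 hp2), mul_nonneg hp1.le hζ,
        mul_nonneg (neg_nonneg.2 hp2) hζ]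
    exact nonneg_of_mul_nonneg_right h3 hdet
  have a1 := mul_nonneg hN1.le hU
  have a2 := mul_nonneg hN2.le hV
  have e1 : N1 * U = 0 := by linarith
  have e2 : N2 * V = 0 := by linarith
  exact ⟨(mul_eq_zero.1 e1).resolve_left hN1.ne', (mul_eq_zero.1 e2).resolve_left hN2.ne',
    by linarith⟩

section core
variable {ι : Type*} [Fintype ι] [DecidableEq ι]

lemma minS (G : Finset ι) (h : ι → ℝ) (x : ℕ) (hx : x ≤ G.card) :
    ∃ S ⊆ G, S.card = x ∧ ∑ i ∈ S, h i ≤ x * ((∑ i ∈ G, h i) / G.card) ∧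
      (0 < x → x < G.card → ∑ i ∈ S, h i = x * ((∑ i ∈ G, h i) / G.card) →
        ∀ i ∈ G, ∀ j ∈ G, h i = h j) := by
  have hne : (G.powersetCard x).Nonempty := Finset.powersetCard_nonempty.2 hx
  obtain ⟨S, hS, hmin⟩ := Finset.exists_min_image _ (fun S => ∑ i ∈ S, h i) hne
  rw [Finset.mem_powersetCard] at hS
  obtain ⟨hSG, hSx⟩ := hS
  have hle : ∀ i ∈ S, ∀ j ∈ G \ S, h i ≤ h j := by
    intro i hi j hj
    rw [Finset.mem_sdiff] at hj
    have hjn : j ∉ S.erase i := fun hh => hj.2 (Finset.mem_of_mem_erase hh)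
    have hm := hmin (insert j (S.erase i)) (by
      rw [Finset.mem_powersetCard]
      refine ⟨?_, ?_⟩
      · intro k hk
        rcases Finset.mem_insert.1 hk with rfl | hk
        · exact hj.1
        · exact hSG (Finset.mem_of_mem_erase hk)
      · rw [Finset.card_insert_of_notMem hjn, Finset.card_erase_of_mem hi, hSx]
        have : 0 < S.card := Finset.card_pos.2 ⟨i, hi⟩
        omega)
    simp only [Finset.sum_insert hjn] at hm
    have := Finset.add_sum_erase S h hi
    linarith
  have hGs : ∑ i ∈ G \ S, h i = ∑ i ∈ G, h i - ∑ i ∈ S, h i := by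
    have := Finset.sum_sdiff (f := h) hSG
    linarith
  have hcard : ((G \ S).card : ℝ) = G.card - x := by
    rw [Finset.card_sdiff_of_subset hSG, hSx, Nat.cast_sub hx]
  have e1 : ∑ i ∈ S, ∑ j ∈ G \ S, h i = (G.card - x) * ∑ i ∈ S, h i := by
    simp only [Finset.sum_const, nsmul_eq_mul, hcard, Finset.mul_sum]
  have e2 : ∑ i ∈ S, ∑ j ∈ G \ S, h j = x * (∑ i ∈ G, h i - ∑ i ∈ S, h i) := by
    simp only [Finset.sum_const, nsmul_eq_mul, hSx, hGs]
  refine ⟨S, hSG, hSx, ?_, ?_⟩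
  · rcases Nat.eq_zero_or_pos G.card with h0 | hpos
    · have hx0 : x = 0 := by omega
      have : S = ∅ := Finset.card_eq_zero.1 (by omega)
      simp [this, hx0]
    · have hpR : (0 : ℝ) < G.card := by exact_mod_cast hpos
      rw [← mul_div_assoc, le_div_iff₀ hpR]
      have : ∑ i ∈ S, ∑ j ∈ G \ S, h i ≤ ∑ i ∈ S, ∑ j ∈ G \ S, h j :=
        Finset.sum_le_sum fun i hi => Finset.sum_le_sum fun j hj => hle i hi j hj
      rw [e1, e2] at this
      linarith
  · intro hx0 hxG heq
    have hpR : (0 : ℝ) < G.card := by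
      have : 0 < G.card := by omega
      exact_mod_cast this
    rw [← mul_div_assoc, eq_div_iff hpR.ne'] at heq
    have hs : ∑ i ∈ S, ∑ j ∈ G \ S, h i = ∑ i ∈ S, ∑ j ∈ G \ S, h j := by
      rw [e1, e2]; linarith
    have heq1 : ∀ i ∈ S, ∀ j ∈ G \ S, h i = h j := by
      intro i hi
      have h1 := (Finset.sum_eq_sum_iff_of_le (fun i hi => Finset.sum_le_sum
        fun j hj => hle i hi j hj)).1 hs i hi
      exact (Finset.sum_eq_sum_iff_of_le (fun j hj => hle i hi j hj)).1 h1
    obtain ⟨i0, hi0⟩ : S.Nonempty := Finset.card_pos.1 (by omega)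
    obtain ⟨j0, hj0⟩ : (G \ S).Nonempty := Finset.card_pos.1 (by
      rw [Finset.card_sdiff_of_subset hSG]; omega)
    have hall : ∀ i ∈ G, h i = h j0 := by
      intro i hi
      by_cases hiS : i ∈ S
      · exact heq1 i hiS j0 hj0
      · rw [← heq1 i0 hi0 i (Finset.mem_sdiff.2 ⟨hi, hiS⟩), heq1 i0 hi0 j0 hj0]
    intro i hi j hj
    rw [hall i hi, hall j hj]

lemma sval_types {w : ι → ℝ} {G1 G2 : Finset ι} {a b : ℝ} (hG : Disjoint G1 G2)
    (h1 : ∀ i ∈ G1, w i = a) (h2 : ∀ i ∈ G2, w i = b) (h0 : ∀ i, i ∉ G1 → i ∉ G2 → w i = 0)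
    (S : Finset ι) :
    sval w S = (2 * ((S ∩ G1).card : ℝ) - G1.card) * a
      + (2 * ((S ∩ G2).card : ℝ) - G2.card) * b := by
  have hw : ∀ i, w i = (if i ∈ G1 then a else 0) + (if i ∈ G2 then b else 0) := by
    intro i
    by_cases hi1 : i ∈ G1
    · have hi2 : i ∉ G2 := Finset.disjoint_left.1 hG hi1
      simp [hi1, hi2, h1 i hi1]
    · by_cases hi2 : i ∈ G2
      · simp [hi1, hi2, h2 i hi2]
      · simp [hi1, hi2, h0 i hi1 hi2]
  have hs : ∀ T : Finset ι, ∑ i ∈ T, w i = (T ∩ G1).card * a + (T ∩ G2).card * b := by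
    intro T
    simp only [hw, Finset.sum_add_distrib, Finset.sum_ite_mem, Finset.sum_const, nsmul_eq_mul]
  rw [sval, hs, hs, Finset.univ_inter, Finset.univ_inter]
  ring

lemma tight_exists {w : ι → ℝ} (hw0 : ∀ i, 0 ≤ w i) {G : Finset ι} {a : ℝ} (ha : 0 < a)
    (hG : G.Nonempty) (h1 : ∀ i ∈ G, w i = a)
    (H2 : ∀ w' : ι → ℝ, (∀ S, 1 ≤ sval w S → 1 ≤ sval w' S) → ∑ i, w i ≤ ∑ i, |w' i|) :
    ∃ S, sval w S = 1 ∧ (G.card : ℝ) < 2 * (S ∩ G).card := by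
  by_contra hcon
  push Not at hcon
  have hN : (0 : ℝ) < G.card := by exact_mod_cast hG.card_pos
  obtain ⟨ε, hε, hεa, hεS⟩ : ∃ ε : ℝ, 0 < ε ∧ ε ≤ a ∧
      ∀ S, 1 < sval w S → ε * G.card ≤ sval w S - 1 := by
    have h1 : ∀ᶠ ε : ℝ in nhdsWithin 0 (Set.Ioi 0), ∀ S : Finset ι,
        1 < sval w S → ε * G.card ≤ sval w S - 1 := by
      rw [Filter.eventually_all]
      intro S
      by_cases hS : 1 < sval w S
      · have : ∀ᶠ ε : ℝ in nhdsWithin 0 (Set.Ioi 0), ε < (sval w S - 1) / G.card :=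
          (eventually_lt_nhds (div_pos (by linarith) hN)).filter_mono nhdsWithin_le_nhds
        filter_upwards [this] with ε he _
        exact ((lt_div_iff₀ hN).1 he).le
      · exact Filter.Eventually.of_forall fun _ h => absurd h hS
    have h2 : ∀ᶠ ε : ℝ in nhdsWithin 0 (Set.Ioi 0), ε < a :=
      (eventually_lt_nhds ha).filter_mono nhdsWithin_le_nhds
    obtain ⟨ε, h3, h4, h5⟩ := (h1.and (h2.and self_mem_nhdsWithin)).exists
    exact ⟨ε, h5, h4.le, h3⟩
  let w' : ι → ℝ := fun i => w i - if i ∈ G then ε else 0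
  have hs : ∀ T : Finset ι, ∑ i ∈ T, w' i = ∑ i ∈ T, w i - (T ∩ G).card * ε := by
    intro T
    simp only [w', Finset.sum_sub_distrib, Finset.sum_ite_mem, Finset.sum_const, nsmul_eq_mul]
  have hv : ∀ S, sval w' S = sval w S - ε * (2 * (S ∩ G).card - G.card) := by
    intro S
    rw [sval, hs, hs, sval, Finset.univ_inter]; ring
  have hfeas : ∀ S, 1 ≤ sval w S → 1 ≤ sval w' S := by
    intro S hS
    rw [hv]
    rcases hS.eq_or_lt with he | hl
    · have := hcon S he.symm
      nlinarith
    · have h3 := hεS S hl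
      have h4 : ((S ∩ G).card : ℝ) ≤ G.card := by
        exact_mod_cast Finset.card_le_card Finset.inter_subset_right
      nlinarith
  have hle := H2 w' hfeas
  have habs : ∀ i, |w' i| = w' i := by
    intro i
    apply abs_of_nonneg
    by_cases hi : i ∈ G
    · simp only [w', hi, if_true, h1 i hi]; linarith
    · simp only [w', hi, if_false, sub_zero]; exact hw0 i
  simp only [habs] at hle
  rw [hs, Finset.univ_inter] at hle
  nlinarith

lemma hineq {G1 G2 : Finset ι} (hG : Disjoint G1 G2) (h : ι → ℝ) (x y : ℕ)
    (hx : x ≤ G1.card) (hy : y ≤ G2.card)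
    (hS : ∀ S : Finset ι, (S ∩ G1).card = x → (S ∩ G2).card = y → 0 ≤ sval h S) :
    ∑ i ∈ (G1 ∪ G2)ᶜ, |h i| ≤ (2 * (x : ℝ) - G1.card) * ((∑ i ∈ G1, h i) / G1.card)
      + (2 * (y : ℝ) - G2.card) * ((∑ i ∈ G2, h i) / G2.card) ∧
    (∑ i ∈ G1, h i = 0 → ∑ i ∈ G2, h i = 0 →
      (0 < x → x < G1.card → ∀ i ∈ G1, ∀ j ∈ G1, h i = h j) ∧
      (0 < y → y < G2.card → ∀ i ∈ G2, ∀ j ∈ G2, h i = h j)) := by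
  obtain ⟨S1, hS1, hc1, hle1, heq1⟩ := minS G1 h x hx
  obtain ⟨S2, hS2, hc2, hle2, heq2⟩ := minS G2 h y hy
  set Z := (G1 ∪ G2)ᶜ with hZ
  set S3 := Z.filter (fun i => h i < 0) with hS3
  have hZ1 : Disjoint (G1 ∪ G2) Z := disjoint_compl_right
  have hS3Z : S3 ⊆ Z := Finset.filter_subset _ _
  have hd12 : Disjoint S1 S2 := Finset.disjoint_of_subset_left hS1
    (Finset.disjoint_of_subset_right hS2 hG)
  have hd3 : Disjoint (S1 ∪ S2) S3 := Finset.disjoint_of_subset_left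
    (Finset.union_subset_union hS1 hS2) (Finset.disjoint_of_subset_right hS3Z hZ1)
  have hnz : ∀ i ∈ S3, i ∉ G1 ∧ i ∉ G2 := by
    intro i hi
    have := hS3Z hi
    rw [hZ, Finset.mem_compl, Finset.mem_union] at this
    tauto
  have hi1 : (S1 ∪ S2 ∪ S3) ∩ G1 = S1 := by
    ext i
    simp only [Finset.mem_inter, Finset.mem_union]
    constructor
    · rintro ⟨(h1 | h1) | h1, h2⟩
      · exact h1
      · exact absurd (hS2 h1) (Finset.disjoint_left.1 hG h2)
      · exact absurd h2 (hnz i h1).1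
    · exact fun h1 => ⟨Or.inl (Or.inl h1), hS1 h1⟩
  have hi2 : (S1 ∪ S2 ∪ S3) ∩ G2 = S2 := by
    ext i
    simp only [Finset.mem_inter, Finset.mem_union]
    constructor
    · rintro ⟨(h1 | h1) | h1, h2⟩
      · exact absurd h2 (Finset.disjoint_left.1 hG (hS1 h1))
      · exact h1
      · exact absurd h2 (hnz i h1).2
    · exact fun h1 => ⟨Or.inl (Or.inr h1), hS2 h1⟩
  have hval := hS (S1 ∪ S2 ∪ S3) (by rw [hi1, hc1]) (by rw [hi2, hc2])
  have habs : ∑ i ∈ Z, |h i| = ∑ i ∈ Z, h i - 2 * ∑ i ∈ S3, h i := by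
    rw [hS3, Finset.sum_filter, Finset.mul_sum, ← Finset.sum_sub_distrib]
    refine Finset.sum_congr rfl fun i _ => ?_
    split_ifs with hi
    · rw [abs_of_neg hi]; ring
    · rw [abs_of_nonneg (not_lt.1 hi)]; ring
  have htot : ∑ i, h i = ∑ i ∈ G1, h i + ∑ i ∈ G2, h i + ∑ i ∈ Z, h i := by
    rw [← Finset.sum_union hG, ← Finset.sum_union hZ1]
    congr 1
    rw [hZ, Finset.union_compl]
  rw [sval, Finset.sum_union hd3, Finset.sum_union hd12, htot] at hval
  have hdiv : ∀ G : Finset ι, (G.card : ℝ) * ((∑ i ∈ G, h i) / G.card) = ∑ i ∈ G, h i := by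
    intro G
    rcases Finset.eq_empty_or_nonempty G with rfl | hne
    · simp
    · have : (G.card : ℝ) ≠ 0 := by exact_mod_cast hne.card_pos.ne'
      field_simp
  refine ⟨?_, ?_⟩
  · have := hdiv G1
    have := hdiv G2
    rw [habs]
    linarith
  · intro hz1 hz2
    have hZn : 0 ≤ ∑ i ∈ Z, |h i| := Finset.sum_nonneg fun _ _ => abs_nonneg _
    rw [hz1, zero_div, mul_zero] at hle1 heq1
    rw [hz2, zero_div, mul_zero] at hle2 heq2
    rw [hz1, hz2] at hval
    exact ⟨fun h1 h2 => heq1 h1 h2 (by linarith), fun h1 h2 => heq2 h1 h2 (by linarith)⟩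

lemma const_zero (G : Finset ι) (h : ι → ℝ) (hs : ∑ i ∈ G, h i = 0)
    (hc : ∀ i ∈ G, ∀ j ∈ G, h i = h j) : ∀ i ∈ G, h i = 0 := by
  intro i hi
  have : ∑ j ∈ G, h j = G.card * h i := by
    rw [Finset.sum_congr rfl (fun j hj => hc j hj i hi), Finset.sum_const, nsmul_eq_mul]
  rw [hs] at this
  have hp : (G.card : ℝ) ≠ 0 := by exact_mod_cast (Finset.card_pos.2 ⟨i, hi⟩).ne'
  rcases mul_eq_zero.1 this.symm with h | h
  · exact absurd h hp
  · exact h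

lemma card_le_one_const (G : Finset ι) (h : ι → ℝ) (hc : G.card ≤ 1) :
    ∀ i ∈ G, ∀ j ∈ G, h i = h j := by
  intro i hi j hj
  rw [Finset.card_le_one.1 hc i hi j hj]

lemma exists_counts {G1 G2 : Finset ι} (hG : Disjoint G1 G2) (x y : ℕ)
    (hx : x ≤ G1.card) (hy : y ≤ G2.card) :
    ∃ S : Finset ι, (S ∩ G1).card = x ∧ (S ∩ G2).card = y := by
  obtain ⟨S1, hS1, hc1⟩ := Finset.exists_subset_card_eq hx
  obtain ⟨S2, hS2, hc2⟩ := Finset.exists_subset_card_eq hy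
  refine ⟨S1 ∪ S2, ?_, ?_⟩
  · rw [Finset.union_inter_distrib_right, Finset.inter_eq_left.2 hS1,
      Finset.disjoint_iff_inter_eq_empty.1 (Finset.disjoint_of_subset_left hS2 hG.symm),
      Finset.union_empty, hc1]
  · rw [Finset.union_inter_distrib_right, Finset.inter_eq_left.2 hS2,
      Finset.disjoint_iff_inter_eq_empty.1 (Finset.disjoint_of_subset_left hS1 hG),
      Finset.empty_union, hc2]

lemma core_types {w : ι → ℝ} (hw0 : ∀ i, 0 ≤ w i) {G1 G2 : Finset ι} {a b : ℝ}
    (ha : 0 < a) (hb : 0 < b) (hG : Disjoint G1 G2) (hne : G1.Nonempty)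
    (h1 : ∀ i ∈ G1, w i = a) (h2 : ∀ i ∈ G2, w i = b) (h0 : ∀ i, i ∉ G1 → i ∉ G2 → w i = 0)
    (H1 : ∀ S, 1 ≤ sval w S ∨ sval w S ≤ -1)
    (H2 : ∀ w' : ι → ℝ, (∀ S, 1 ≤ sval w S → 1 ≤ sval w' S) → ∑ i, w i ≤ ∑ i, |w' i|) :
    (∃ S, sval w S = 1) ∧ (∀ i, ∃ m : ℤ, w i = m) ∧
    ∀ w' : ι → ℝ, (∀ S, 1 ≤ sval w S → 1 ≤ sval w' S) → ∑ i, |w' i| ≤ ∑ i, w i → w' = w := by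
  have hval := sval_types hG h1 h2 h0
  obtain ⟨T1, hT1, hT1p⟩ := tight_exists hw0 ha hne h1 H2
  have hN1 : (0 : ℝ) < G1.card := by exact_mod_cast hne.card_pos
  -- facts about the difference
  have hdiff : ∀ w' : ι → ℝ, (∀ S, 1 ≤ sval w S → 1 ≤ sval w' S) → ∑ i, |w' i| ≤ ∑ i, w i →
      (∀ S, sval w S = 1 → 0 ≤ sval (fun i => w' i - w i) S) ∧
      ∑ i ∈ G1, (w' i - w i) + ∑ i ∈ G2, (w' i - w i)
        + ∑ i ∈ (G1 ∪ G2)ᶜ, |w' i - w i| ≤ 0 := by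
    intro w' hf hle
    refine ⟨?_, ?_⟩
    · intro S hS
      have h3 := hf S hS.ge
      have : sval (fun i => w' i - w i) S = sval w' S - sval w S := by
        simp only [sval, Finset.sum_sub_distrib]; ring
      rw [this]; linarith
    · have hsplit : ∀ f : ι → ℝ, ∑ i, f i = ∑ i ∈ G1, f i + ∑ i ∈ G2, f i
          + ∑ i ∈ (G1 ∪ G2)ᶜ, f i := by
        intro f
        rw [← Finset.sum_union hG, Finset.sum_add_sum_compl]
      have e1 : ∑ i ∈ G1, (w' i - w i) ≤ ∑ i ∈ G1, (|w' i| - w i) :=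
        Finset.sum_le_sum fun i _ => by linarith [le_abs_self (w' i)]
      have e2 : ∑ i ∈ G2, (w' i - w i) ≤ ∑ i ∈ G2, (|w' i| - w i) :=
        Finset.sum_le_sum fun i _ => by linarith [le_abs_self (w' i)]
      have e3 : ∑ i ∈ (G1 ∪ G2)ᶜ, |w' i - w i| = ∑ i ∈ (G1 ∪ G2)ᶜ, (|w' i| - w i) := by
        refine Finset.sum_congr rfl fun i hi => ?_
        rw [Finset.mem_compl, Finset.mem_union, not_or] at hi
        rw [h0 i hi.1 hi.2, sub_zero, sub_zero]
      have e4 := hsplit (fun i => |w' i| - w i)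
      rw [Finset.sum_sub_distrib] at e4
      linarith
  -- turning zero sums into equality
  have hfin : ∀ w' : ι → ℝ, ∑ i ∈ (G1 ∪ G2)ᶜ, |w' i - w i| ≤ 0 →
      (∀ i ∈ G1, w' i - w i = 0) → (∀ i ∈ G2, w' i - w i = 0) → w' = w := by
    intro w' hz e1 e2
    funext i
    by_cases hi1 : i ∈ G1
    · linarith [e1 i hi1]
    by_cases hi2 : i ∈ G2
    · linarith [e2 i hi2]
    have hz' : ∑ i ∈ (G1 ∪ G2)ᶜ, |w' i - w i| = 0 :=
      le_antisymm hz (Finset.sum_nonneg fun _ _ => abs_nonneg _)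
    have := (Finset.sum_eq_zero_iff_of_nonneg (fun _ _ => abs_nonneg _)).1 hz' i (by
      rw [Finset.mem_compl, Finset.mem_union]; tauto)
    linarith [abs_eq_zero.1 this]
  have box : ∀ x y : ℕ, x ≤ G1.card → y ≤ G2.card →
      1 ≤ (2 * (x : ℝ) - G1.card) * a + (2 * (y : ℝ) - G2.card) * b ∨
      (2 * (x : ℝ) - G1.card) * a + (2 * (y : ℝ) - G2.card) * b ≤ -1 := by
    intro x y hx hy
    obtain ⟨S, hS1, hS2⟩ := exists_counts hG x y hx hy
    have := H1 S
    rwa [hval, hS1, hS2] at this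
  refine ⟨⟨T1, hT1⟩, ?_⟩
  have hT1x : (T1 ∩ G1).card ≤ G1.card := Finset.card_le_card Finset.inter_subset_right
  have hT1y : (T1 ∩ G2).card ≤ G2.card := Finset.card_le_card Finset.inter_subset_right
  have hT1v := hT1
  rw [hval] at hT1v
  have hT1pN : G1.card < 2 * (T1 ∩ G1).card := by exact_mod_cast hT1p
  rcases Finset.eq_empty_or_nonempty G2 with hG2 | hne2
  · -- a single type
    subst hG2
    simp only [Finset.inter_empty, Finset.card_empty, Nat.cast_zero, mul_zero, sub_zero, zero_mul,
      add_zero] at hT1v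
    have ha1 : 1 ≤ a := by
      have hb1 := box ((T1 ∩ G1).card - 1) 0 (by omega) (by simp)
      rw [Nat.cast_sub (by omega)] at hb1
      simp only [Finset.card_empty, Nat.cast_zero, mul_zero, sub_zero, zero_mul,
        add_zero, Nat.cast_one] at hb1
      rcases hb1 with h | h <;> linarith
    have hp1 : (G1.card : ℝ) + 1 ≤ 2 * (T1 ∩ G1).card := by exact_mod_cast hT1pN
    have ha1' : a = 1 := by nlinarith
    rw [ha1', mul_one] at hT1v
    have hT1N : 2 * (T1 ∩ G1).card = G1.card + 1 := by
      have : 2 * ((T1 ∩ G1).card : ℝ) = G1.card + 1 := by linarith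
      exact_mod_cast this
    refine ⟨?_, ?_⟩
    · intro i
      by_cases hi : i ∈ G1
      · exact ⟨1, by rw [h1 i hi, ha1']; simp⟩
      · exact ⟨0, by rw [h0 i hi (by simp)]; simp⟩
    · intro w' hf hle
      obtain ⟨d1, d2⟩ := hdiff w' hf hle
      obtain ⟨k1, k2⟩ := hineq hG (fun i => w' i - w i) (T1 ∩ G1).card 0 hT1x (by simp) (by
        intro S hS1 _
        apply d1
        rw [hval, hS1, ha1', mul_one]
        simpa using hT1v)
      simp only [Finset.sum_empty, Finset.card_empty, Nat.cast_zero, mul_zero, sub_zero, zero_mul,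
        add_zero, hT1v, one_mul] at k1 d2 k2
      have hZ : 0 ≤ ∑ i ∈ (G1 ∪ ∅)ᶜ, |w' i - w i| := Finset.sum_nonneg fun _ _ => abs_nonneg _
      have hs : ∑ i ∈ G1, (w' i - w i) = 0 := by
        have h3 : 0 ≤ (∑ i ∈ G1, (w' i - w i)) / G1.card := hZ.trans k1
        have h4 : 0 ≤ ∑ i ∈ G1, (w' i - w i) := by
          by_contra hneg
          push Not at hneg
          exact absurd h3 (not_le.2 (div_neg_of_neg_of_pos hneg hN1))
        linarith
      refine hfin w' (by linarith) (const_zero G1 (fun i => w' i - w i) hs ?_) (by simp)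
      by_cases hc : G1.card ≤ 1
      · exact card_le_one_const G1 _ hc
      · exact (k2 hs trivial).1 (by omega) (by omega)
  · -- two types
    have hN2 : (0 : ℝ) < G2.card := by exact_mod_cast hne2.card_pos
    obtain ⟨T2, hT2, hT2p⟩ := tight_exists hw0 hb hne2 h2 H2
    have hT2x : (T2 ∩ G1).card ≤ G1.card := Finset.card_le_card Finset.inter_subset_right
    have hT2y : (T2 ∩ G2).card ≤ G2.card := Finset.card_le_card Finset.inter_subset_right
    have hT2v := hT2
    rw [hval] at hT2v
    have hT2pN : G2.card < 2 * (T2 ∩ G2).card := by exact_mod_cast hT2p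
    obtain ⟨⟨ma, hma⟩, ⟨mb, hmb⟩, hr1, hp2, ⟨x3, y3, a1, a2, a3, a4, a5, a6⟩,
      ⟨x4, y4, b1, b2, b3, b4, b5, b6⟩⟩ := num_main (G1.card : ℤ) (G2.card : ℤ) a b ha hb
        (by
          intro x y hx0 hx hy0 hy
          lift x to ℕ using hx0
          lift y to ℕ using hy0
          have := box x y (by exact_mod_cast hx) (by exact_mod_cast hy)
          simpa using this)
        (T1 ∩ G1).card (T1 ∩ G2).card (T2 ∩ G1).card (T2 ∩ G2).card
        ⟨by omega, by omega⟩ ⟨by omega, by omega⟩ ⟨by omega, by omega⟩ ⟨by omega, by omega⟩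
        (by simpa using hT1v) (by omega) (by simpa using hT2v) (by omega)
    refine ⟨?_, ?_⟩
    · intro i
      by_cases hi : i ∈ G1
      · exact ⟨ma, by rw [h1 i hi, hma]⟩
      by_cases hi2 : i ∈ G2
      · exact ⟨mb, by rw [h2 i hi2, hmb]⟩
      · exact ⟨0, by rw [h0 i hi hi2]; simp⟩
    · intro w' hf hle
      obtain ⟨d1, d2⟩ := hdiff w' hf hle
      have hin : ∀ x y : ℕ, (hx : x ≤ G1.card) → (hy : y ≤ G2.card) →
          (2 * (x : ℝ) - G1.card) * a + (2 * (y : ℝ) - G2.card) * b = 1 → _ :=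
        fun x y hx hy hxy => hineq hG (fun i => w' i - w i) x y hx hy (by
          intro S hS1 hS2
          apply d1
          rw [hval, hS1, hS2, hxy])
      have k1 := (hin _ _ hT1x hT1y hT1v).1
      have k2 := (hin _ _ hT2x hT2y hT2v).1
      have hZ : 0 ≤ ∑ i ∈ (G1 ∪ G2)ᶜ, |w' i - w i| := Finset.sum_nonneg fun _ _ => abs_nonneg _
      obtain ⟨U, hU⟩ : ∃ U, U = (∑ i ∈ G1, (w' i - w i)) / G1.card := ⟨_, rfl⟩
      obtain ⟨V, hV⟩ : ∃ V, V = (∑ i ∈ G2, (w' i - w i)) / G2.card := ⟨_, rfl⟩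
      have hU' : ∑ i ∈ G1, (w' i - w i) = G1.card * U := by
        rw [eq_div_iff hN1.ne'] at hU; linarith
      have hV' : ∑ i ∈ G2, (w' i - w i) = G2.card * V := by
        rw [eq_div_iff hN2.ne'] at hV; linarith
      rw [← hU, ← hV] at k1 k2
      rw [hU', hV'] at d2
      have hr1R : 2 * ((T1 ∩ G2).card : ℝ) - G2.card ≤ 0 := by exact_mod_cast hr1
      have hp2R : 2 * ((T2 ∩ G1).card : ℝ) - G1.card ≤ 0 := by exact_mod_cast hp2
      have hp1R : 0 < 2 * ((T1 ∩ G1).card : ℝ) - G1.card := by linarith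
      have hr2R : 0 < 2 * ((T2 ∩ G2).card : ℝ) - G2.card := by linarith
      obtain ⟨hU0, hV0, hζ⟩ := real_cone ha hN1 hN2 hp1R hr1R hp2R hr2R hT1v hT2v k1 k2 d2 hZ
      rw [hU0, mul_zero] at hU'
      rw [hV0, mul_zero] at hV'
      refine hfin w' hζ.le (const_zero G1 (fun i => w' i - w i) hU' ?_)
        (const_zero G2 (fun i => w' i - w i) hV' ?_)
      · rcases a6 with a6 | a6
        · exact card_le_one_const G1 _ (by omega)
        · lift x3 to ℕ using a1
          lift y3 to ℕ using a3
          exact ((hin x3 y3 (by omega) (by omega) (by simpa using a5)).2 hU' hV').1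
            (by omega) (by omega)
      · rcases b6 with b6 | b6
        · exact card_le_one_const G2 _ (by omega)
        · lift x4 to ℕ using b1
          lift y4 to ℕ using b3
          exact ((hin x4 y4 (by omega) (by omega) (by simpa using b5)).2 hU' hV').2
            (by omega) (by omega)

lemma sval_eq (f : ι → ℝ) (S : Finset ι) : sval f S = ∑ i, if i ∈ S then f i else - f i := by
  have : ∑ i ∈ S, f i = ∑ i, if i ∈ S then f i else 0 := by
    rw [Finset.sum_ite_mem, Finset.univ_inter]
  rw [sval, this, Finset.mul_sum, ← Finset.sum_sub_distrib]
  refine Finset.sum_congr rfl fun i _ => ?_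
  split_ifs <;> ring

lemma core_nonneg {w : ι → ℝ} (hw0 : ∀ i, 0 ≤ w i) {a b : ℝ}
    (hab : ∀ i, 0 < w i → w i = a ∨ w i = b)
    (H1 : ∀ S, 1 ≤ sval w S ∨ sval w S ≤ -1)
    (H2 : ∀ w' : ι → ℝ, (∀ S, 1 ≤ sval w S → 1 ≤ sval w' S) → ∑ i, w i ≤ ∑ i, |w' i|) :
    (∃ S, sval w S = 1) ∧ (∀ i, ∃ m : ℤ, w i = m) ∧
    ∀ w' : ι → ℝ, (∀ S, 1 ≤ sval w S → 1 ≤ sval w' S) → ∑ i, |w' i| ≤ ∑ i, w i → w' = w := by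
  obtain ⟨i0, hi0⟩ : ∃ i, 0 < w i := by
    by_contra hcon
    push Not at hcon
    have hz : ∀ i, w i = 0 := fun i => le_antisymm (hcon i) (hw0 i)
    have := H1 ∅
    simp [sval, hz] at this
    linarith
  set G1 : Finset ι := Finset.univ.filter (fun i => w i = w i0) with hG1
  set G2 : Finset ι := Finset.univ.filter (fun i => 0 < w i ∧ w i ≠ w i0) with hG2
  have hd : Disjoint G1 G2 := by
    rw [Finset.disjoint_left]
    intro i hi hi2
    simp only [hG1, hG2, Finset.mem_filter, Finset.mem_univ, true_and] at hi hi2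
    exact hi2.2 hi
  obtain ⟨b', hb', hb2⟩ : ∃ b' : ℝ, 0 < b' ∧ ∀ i ∈ G2, w i = b' := by
    rcases Finset.eq_empty_or_nonempty G2 with h | ⟨j0, hj0⟩
    · exact ⟨1, one_pos, by simp [h]⟩
    · simp only [hG2, Finset.mem_filter, Finset.mem_univ, true_and] at hj0
      refine ⟨w j0, hj0.1, ?_⟩
      intro i hi
      simp only [hG2, Finset.mem_filter, Finset.mem_univ, true_and] at hi
      rcases hab i0 hi0 with e0 | e0 <;> rcases hab j0 hj0.1 with e1 | e1 <;>
        rcases hab i hi.1 with e2 | e2 <;> simp_all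
  refine core_types hw0 hi0 hb' hd ⟨i0, by simp [hG1]⟩ ?_ hb2 ?_ H1 H2
  · intro i hi
    simpa [hG1] using hi
  · intro i hi1 hi2
    simp only [hG1, hG2, Finset.mem_filter, Finset.mem_univ, true_and, not_and, not_not]
      at hi1 hi2
    by_contra hne
    exact hi1 (hi2 (lt_of_le_of_ne (hw0 i) (Ne.symm hne)))

lemma sval_flip (f : ι → ℝ) (N S : Finset ι) :
    sval (fun i => if i ∈ N then - f i else f i) S = sval f (symmDiff S N) := by
  rw [sval_eq, sval_eq]
  refine Finset.sum_congr rfl fun i _ => ?_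
  simp only [Finset.mem_symmDiff]
  by_cases h1 : i ∈ S <;> by_cases h2 : i ∈ N <;> simp [h1, h2]

lemma core_general {w : ι → ℝ} {a b : ℝ}
    (hab : ∀ i, w i ≠ 0 → |w i| = a ∨ |w i| = b)
    (H1 : ∀ S, 1 ≤ sval w S ∨ sval w S ≤ -1)
    (H2 : ∀ w' : ι → ℝ, (∀ S, 1 ≤ sval w S → 1 ≤ sval w' S) → ∑ i, |w i| ≤ ∑ i, |w' i|) :
    (∃ S, sval w S = 1) ∧ (∀ i, ∃ m : ℤ, w i = m) ∧
    ∀ w' : ι → ℝ, (∀ S, 1 ≤ sval w S → 1 ≤ sval w' S) → ∑ i, |w' i| ≤ ∑ i, |w i| →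
      w' = w := by
  set N : Finset ι := Finset.univ.filter (fun i => w i < 0) with hN
  let fl : (ι → ℝ) → ι → ℝ := fun f i => if i ∈ N then - f i else f i
  have hfl : fl w = fun i => |w i| := by
    funext i
    by_cases hi : w i < 0
    · simp [fl, hN, hi, abs_of_neg hi]
    · simp [fl, hN, hi, abs_of_nonneg (not_lt.1 hi)]
  have hfl2 : ∀ f, fl (fl f) = f := by
    intro f
    funext i
    by_cases hi : i ∈ N <;> simp [fl, hi]
  have habs : ∀ f i, |fl f i| = |f i| := by
    intro f i
    by_cases hi : i ∈ N <;> simp [fl, hi]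
  have hs : ∀ f S, sval (fl f) S = sval f (symmDiff S N) := fun f S => sval_flip f N S
  have hs2 : ∀ f S, sval f S = sval (fl f) (symmDiff S N) := by
    intro f S
    rw [hs, symmDiff_symmDiff_cancel_right]
  have hsw : ∀ S, sval (fun i => |w i|) S = sval w (symmDiff S N) := fun S => by
    rw [← hfl, hs]
  obtain ⟨⟨S, hS⟩, hint, huniq⟩ := core_nonneg (w := fun i => |w i|) (fun i => abs_nonneg _)
    (a := a) (b := b) (fun i hi => hab i (abs_pos.1 hi))
    (fun S => by rw [hsw]; exact H1 _)
    (fun w' hf => by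
      have := H2 (fl w') (fun S hS => by
        rw [hs]
        apply hf
        rw [hsw, symmDiff_symmDiff_cancel_right]
        exact hS)
      simpa only [habs] using this)
  refine ⟨⟨_, (hsw S).symm.trans hS⟩, ?_, ?_⟩
  · intro i
    obtain ⟨m, hm⟩ := hint i
    rcases abs_choice (w i) with h | h
    · exact ⟨m, by rw [← hm, h]⟩
    · exact ⟨-m, by push_cast; rw [← hm, h, neg_neg]⟩
  · intro w' hf hle
    have := huniq (fl w') (fun S hS => by
      rw [hs]
      apply hf
      rw [← hsw]; exact hS) (by simpa only [habs] using hle)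
    rw [← hfl2 w', this, ← hfl, hfl2]
end core

section cover
variable {d : ℕ}

lemma fiber_sum (k : (Fin d → Fin 2) → ℝ) (g : Fin d → Fin 2 → ℝ) :
    ∑ α, k α * ∑ i, g i (α i) = ∑ i, ∑ j, g i j * hypSum k i j := by
  simp only [Finset.mul_sum]
  rw [Finset.sum_comm]
  refine Finset.sum_congr rfl fun i _ => ?_
  rw [← Finset.sum_fiberwise (s := Finset.univ) (g := fun α : Fin d → Fin 2 => α i)]
  refine Finset.sum_congr rfl fun j _ => ?_
  rw [hypSum, Finset.mul_sum]
  refine Finset.sum_congr rfl fun α hα => ?_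
  rw [(Finset.mem_filter.1 hα).2, mul_comm]

lemma weak_duality {A : (Fin d → Fin 2) → Bool} {k : (Fin d → Fin 2) → ℝ} {W : ℝ}
    {Λ : Fin d → Fin 2 → ℝ} (hk : IsPolyplex A k W) (hΛ : IsCover A Λ) : W ≤ coverWeight Λ := by
  obtain ⟨k0, kA, kh, rfl⟩ := hk
  calc ∑ α, k α ≤ ∑ α, k α * ∑ i, Λ i (α i) := by
        refine Finset.sum_le_sum fun α _ => ?_
        cases h : A α with
        | false => simp [kA α h]
        | true => nlinarith [hΛ.2 α h, k0 α]
    _ = ∑ i, ∑ j, Λ i j * hypSum k i j := fiber_sum k Λ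
    _ ≤ coverWeight Λ := by
        refine Finset.sum_le_sum fun i _ => Finset.sum_le_sum fun j _ => ?_
        nlinarith [hΛ.1 i j, kh i j]

/-- The linear map sending a weighting to its hyperplane sums. -/
noncomputable def hypLin (d : ℕ) : ((Fin d → Fin 2) → ℝ) →ₗ[ℝ] (Fin d × Fin 2 → ℝ) where
  toFun k p := hypSum k p.1 p.2
  map_add' k l := by
    funext p
    simp [hypSum, Finset.sum_add_distrib]
  map_smul' c k := by
    funext p
    simp [hypSum, Finset.mul_sum]

lemma strong_duality (A : (Fin d → Fin 2) → Bool) {W : ℝ} (hW : 0 < W)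
    (hno : ¬ ∃ k, IsPolyplex A k W) : ∃ Λ, IsCover A Λ ∧ coverWeight Λ < W := by
  by_cases hemp : ∀ α, A α = false
  · refine ⟨fun _ _ => 0, ⟨fun _ _ => le_rfl, fun α h => ?_⟩, by simpa [coverWeight] using hW⟩
    rw [hemp α] at h
    exact absurd h (by simp)
  push Not at hemp
  obtain ⟨α0, hα0⟩ := hemp
  have hα0 : A α0 = true := by simpa using hα0
  set K : Set ((Fin d → Fin 2) → ℝ) :=
    stdSimplex ℝ (Fin d → Fin 2) ∩ {k | ∀ α, A α = false → k α = 0} with hK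
  have hKc : IsCompact K := by
    refine (isCompact_stdSimplex ℝ _).inter_right ?_
    simp only [Set.ofPred_forall]
    refine isClosed_iInter fun α => isClosed_iInter fun _ => ?_
    exact isClosed_eq (continuous_apply α) continuous_const
  have hKv : Convex ℝ K := by
    refine (convex_stdSimplex ℝ _).inter ?_
    intro x hx y hy s t _ _ _ α hα
    simp [hx α hα, hy α hα]
  set D : Set (Fin d × Fin 2 → ℝ) := {y | ∀ p, y p ≤ 1 / W} with hD
  have hDc : IsClosed D := by
    rw [hD, Set.ofPred_forall]
    exact isClosed_iInter fun p => isClosed_le (continuous_apply p) continuous_const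
  have hDv : Convex ℝ D := by
    intro x hx y hy s t hs ht hst p
    have h1 := mul_le_mul_of_nonneg_left (hx p) hs
    have h2 := mul_le_mul_of_nonneg_left (hy p) ht
    simp only [Pi.add_apply, Pi.smul_apply, smul_eq_mul]
    calc s * x p + t * y p ≤ s * (1 / W) + t * (1 / W) := by linarith
      _ = 1 / W := by rw [← add_mul, hst, one_mul]
  have hcont : Continuous (hypLin d) := LinearMap.continuous_of_finiteDimensional _
  have hdisj : Disjoint (hypLin d '' K) D := by
    rw [Set.disjoint_left]
    rintro _ ⟨k, hk, rfl⟩ hkD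
    apply hno
    refine ⟨fun α => W * k α, fun α => mul_nonneg hW.le (hk.1.1 α), fun α h => ?_, ?_, ?_⟩
    · simp [hk.2 α h]
    · intro i j
      have h1 : hypSum k i j ≤ 1 / W := hkD (i, j)
      rw [le_div_iff₀ hW] at h1
      have : hypSum (fun α => W * k α) i j = W * hypSum k i j := by
        simp [hypSum, Finset.mul_sum]
      rw [this]; linarith
    · rw [← Finset.mul_sum, hk.1.2, mul_one]
  obtain ⟨f, u, v, hu, huv, hv⟩ := geometric_hahn_banach_compact_closed
    (hKv.linear_image (hypLin d)) (hKc.image hcont) hDv hDc hdisj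
  have hf : ∀ y : Fin d × Fin 2 → ℝ, f y = ∑ p, y p * f (Pi.single p 1) := by
    intro y
    conv_lhs => rw [pi_eq_sum_univ' y]
    rw [map_sum]
    refine Finset.sum_congr rfl fun p _ => ?_
    rw [map_smul, smul_eq_mul]
  have hneg : ∀ p, f (Pi.single p 1) ≤ 0 := by
    intro p
    by_contra hpos
    push Not at hpos
    have hc := hv (fun _ => 1 / W) (fun _ => le_rfl)
    set t : ℝ := (f (fun _ => 1 / W) - v) / f (Pi.single p 1) with ht
    have ht0 : 0 < t := div_pos (by linarith) hpos
    have h2 := hv ((fun _ => 1 / W) - t • Pi.single p 1) (by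
      intro q
      simp only [Pi.sub_apply, Pi.smul_apply, smul_eq_mul]
      have : 0 ≤ (Pi.single p 1 : Fin d × Fin 2 → ℝ) q := by
        rw [Pi.single_apply]; split_ifs <;> norm_num
      nlinarith)
    rw [map_sub, map_smul, smul_eq_mul, ht, div_mul_cancel₀ _ hpos.ne'] at h2
    linarith
  have hsupp : ∀ α, A α = true → ∑ i, f (Pi.single (i, α i) 1) < u := by
    intro α hα
    have h1 := hu (hypLin d (Pi.single α 1)) ⟨Pi.single α 1, ⟨single_mem_stdSimplex ℝ α, by
      intro β hβ
      have : β ≠ α := by rintro rfl; rw [hα] at hβ; exact absurd hβ (by simp)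
      simp [this]⟩, rfl⟩
    rw [hf] at h1
    have h2 : ∀ i j, hypSum (Pi.single α (1 : ℝ)) i j = if α i = j then 1 else 0 := by
      intro i j
      rw [hypSum, Finset.sum_filter, Finset.sum_eq_single α]
      · simp
      · intro β _ hβ
        simp [hβ]
      · simp
    have h3 : ∑ p, hypLin d (Pi.single α 1) p * f (Pi.single p 1)
        = ∑ i, f (Pi.single (i, α i) 1) := by
      rw [Fintype.sum_prod_type]
      refine Finset.sum_congr rfl fun i _ => ?_
      simp only [hypLin, LinearMap.coe_mk, AddHom.coe_mk, h2]
      simp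
    rwa [h3] at h1
  have htot : v < (∑ p, f (Pi.single p 1)) / W := by
    have := hv (fun _ => 1 / W) (fun _ => le_rfl)
    rw [hf, ← Finset.mul_sum] at this
    rwa [one_div_mul_eq_div] at this
  have hc : 0 < -u := by
    have : ∑ p, f (Pi.single p 1) ≤ 0 := Finset.sum_nonpos fun p _ => hneg p
    have := div_nonpos_of_nonpos_of_nonneg this hW.le
    linarith
  refine ⟨fun i j => (- f (Pi.single (i, j) 1)) / (-u), ⟨fun i j => ?_, fun α hα => ?_⟩, ?_⟩
  · exact div_nonneg (neg_nonneg.2 (hneg _)) hc.le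
  · rw [← Finset.sum_div, le_div_iff₀ hc, Finset.sum_neg_distrib]
    linarith [hsupp α hα]
  · have : coverWeight (fun i j => (- f (Pi.single ((i : Fin d), (j : Fin 2)) 1)) / (-u))
        = (- ∑ p, f (Pi.single p 1)) / (-u) := by
      rw [coverWeight, Fintype.sum_prod_type]
      simp only [← Finset.sum_div, Finset.sum_neg_distrib]
    rw [this, div_lt_iff₀ hc]
    rw [lt_div_iff₀ hW] at htot
    nlinarith

lemma extremal_pos {A : (Fin d → Fin 2) → Bool} (hA : IsExtremal A) : 0 < d := by
  rcases Nat.eq_zero_or_pos d with rfl | h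
  · exact absurd ⟨fun _ => 0, fun _ => le_rfl, fun _ _ => rfl, fun i => i.elim0⟩ hA.1
  · exact h

lemma hyp_add (k : (Fin d → Fin 2) → ℝ) (i : Fin d) :
    hypSum k i 0 + hypSum k i 1 = ∑ α, k α := by
  rw [← Finset.sum_fiberwise (s := Finset.univ) (g := fun α : Fin d → Fin 2 => α i),
    Fin.sum_univ_two]
  rfl

lemma optimal_lt_two {A : (Fin d → Fin 2) → Bool} (hA : IsExtremal A)
    {Λ : Fin d → Fin 2 → ℝ} (hΛ : IsOptimalCover A Λ) : coverWeight Λ < 2 := by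
  obtain ⟨Λ', h1, h2⟩ := strong_duality A (W := 2) two_pos (by
    rintro ⟨k, k0, kA, kh, ks⟩
    refine hA.1 ⟨k, k0, kA, fun i j => ?_⟩
    have h := hyp_add k i
    have h0 := kh i 0
    have h1 := kh i 1
    fin_cases j <;> simp <;> linarith)
  exact (hΛ.2 Λ' h1).trans_lt h2

lemma optimal_eq {A : (Fin d → Fin 2) → Bool} {Λ : Fin d → Fin 2 → ℝ} (hΛ : IsOptimalCover A Λ) {W : ℝ}
    (hW : IsGreatest {W' | ∃ k, IsPolyplex A k W'} W) : coverWeight Λ = W := by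
  obtain ⟨⟨k, hk⟩, hmax⟩ := hW
  apply le_antisymm
  · apply le_of_forall_gt
    intro W' hW'
    have hpos : 0 ≤ W := by rw [← hk.2.2.2]; exact Finset.sum_nonneg fun α _ => hk.1 α
    obtain ⟨Λ', h1, h2⟩ := strong_duality A (W := W') (by linarith) (fun h => by
      have := hmax h
      linarith)
    exact (hΛ.2 Λ' h1).trans_lt h2
  · exact weak_duality hk hΛ.1

/-- The set of coordinates where the index is `1`. -/
def toS (α : Fin d → Fin 2) : Finset (Fin d) := Finset.univ.filter (fun i => α i = 1)

lemma toS_surj (S : Finset (Fin d)) : ∃ α : Fin d → Fin 2, toS α = S :=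
  ⟨fun i => if i ∈ S then 1 else 0, by
    ext i
    by_cases h : i ∈ S <;> simp [toS, h]⟩

lemma sval_toS (w : Fin d → ℝ) (α : Fin d → Fin 2) :
    sval w (toS α) = ∑ i, if α i = 1 then w i else - w i := by
  rw [sval_eq]; simp [toS]

lemma cover_sum (Λ : Fin d → Fin 2 → ℝ) (α : Fin d → Fin 2) :
    ∑ i, Λ i (α i) = (coverWeight Λ + sval (fun i => Λ i 1 - Λ i 0) (toS α)) / 2 := by
  rw [sval_toS, coverWeight, ← Finset.sum_add_distrib, Finset.sum_div]
  refine Finset.sum_congr rfl fun i _ => ?_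
  rw [Fin.sum_univ_two]
  generalize α i = t
  fin_cases t
  · simp
  · simp; ring

lemma sval_smul (c : ℝ) (w : Fin d → ℝ) (S : Finset (Fin d)) :
    sval (fun i => c * w i) S = c * sval w S := by
  simp only [sval, ← Finset.mul_sum]; ring

/-- The normalised signed weights of a cover. -/
noncomputable def wt (Λ : Fin d → Fin 2 → ℝ) (i : Fin d) : ℝ :=
  (2 - coverWeight Λ)⁻¹ * (Λ i 1 - Λ i 0)

lemma opt_feas {A : (Fin d → Fin 2) → Bool} {Λ : Fin d → Fin 2 → ℝ} (hlt : coverWeight Λ < 2)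
    (hΛ : IsCover A Λ) (α : Fin d → Fin 2) (hα : A α = true) : 1 ≤ sval (wt Λ) (toS α) := by
  have h1 := hΛ.2 α hα
  rw [cover_sum] at h1
  have hd : 0 < 2 - coverWeight Λ := by linarith
  have : sval (wt Λ) (toS α) = (2 - coverWeight Λ)⁻¹ * sval (fun i => Λ i 1 - Λ i 0) (toS α) :=
    sval_smul _ _ _
  rw [this, inv_mul_eq_div, le_div_iff₀ hd]
  linarith

lemma opt_min {A : (Fin d → Fin 2) → Bool} {Λ : Fin d → Fin 2 → ℝ} (hlt : coverWeight Λ < 2)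
    (hΛ : IsOptimalCover A Λ) (w : Fin d → ℝ) (hw : ∀ α, A α = true → 1 ≤ sval w (toS α)) :
    2 / (2 - coverWeight Λ) - 1 ≤ ∑ i, |w i| := by
  set T := ∑ i, |w i| with hT
  have hT0 : 0 ≤ T := Finset.sum_nonneg fun _ _ => abs_nonneg _
  have hd : 0 < 2 - coverWeight Λ := by linarith
  set e : ℝ := 2 / (T + 1) with he
  have he0 : 0 < e := by positivity
  have heT : e * (T + 1) = 2 := by rw [he]; field_simp
  let Λ' : Fin d → Fin 2 → ℝ := fun i j => e * (if j = 1 then max (w i) 0 else max (-w i) 0)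
  have hW' : coverWeight Λ' = e * T := by
    rw [coverWeight, hT, Finset.mul_sum]
    refine Finset.sum_congr rfl fun i _ => ?_
    rw [Fin.sum_univ_two]
    simp only [Λ']
    rcases le_total 0 (w i) with h | h
    · simp [abs_of_nonneg h, h]
    · simp [abs_of_nonpos h, h]
  have hdiff : (fun i => Λ' i 1 - Λ' i 0) = fun i => e * w i := by
    funext i
    simp only [Λ']
    rcases le_total 0 (w i) with h | h
    · simp [h]
    · simp [h]
  have hc : IsCover A Λ' := by
    refine ⟨fun i j => ?_, fun α hα => ?_⟩
    · apply mul_nonneg he0.le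
      split_ifs <;> exact le_max_right _ _
    · rw [cover_sum, hdiff, sval_smul, hW']
      have := hw α hα
      nlinarith
  have h1 := hΛ.2 Λ' hc
  rw [hW'] at h1
  rw [sub_le_iff_le_add, div_le_iff₀ hd]
  nlinarith

lemma opt_struct {A : (Fin d → Fin 2) → Bool} {Λ : Fin d → Fin 2 → ℝ} (hlt : coverWeight Λ < 2)
    (hΛ : IsOptimalCover A Λ) :
    ∑ i, |wt Λ i| = 2 / (2 - coverWeight Λ) - 1 ∧
    ∀ i, Λ i 1 = (2 - coverWeight Λ) * max (wt Λ i) 0 ∧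
      Λ i 0 = (2 - coverWeight Λ) * max (-wt Λ i) 0 := by
  have hd : 0 < 2 - coverWeight Λ := by linarith
  have hmin := opt_min hlt hΛ (wt Λ) (opt_feas hlt hΛ.1)
  have hx : ∀ i, Λ i 1 - Λ i 0 = (2 - coverWeight Λ) * wt Λ i := by
    intro i; rw [wt, mul_inv_cancel_left₀ hd.ne']
  have hle : ∀ i ∈ Finset.univ, (2 - coverWeight Λ) * |wt Λ i| ≤ ∑ j, Λ i j := by
    intro i _
    rw [Fin.sum_univ_two, ← abs_of_pos hd, ← abs_mul, ← hx, abs_le]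
    constructor <;> linarith [hΛ.1.1 i 0, hΛ.1.1 i 1]
  have hsum : (2 - coverWeight Λ) * ∑ i, |wt Λ i| ≤ coverWeight Λ := by
    rw [Finset.mul_sum]; exact Finset.sum_le_sum hle
  have heq : (2 - coverWeight Λ) * ∑ i, |wt Λ i| = coverWeight Λ := by
    apply le_antisymm hsum
    rw [sub_le_iff_le_add, div_le_iff₀ hd] at hmin
    linarith
  refine ⟨?_, ?_⟩
  · rw [eq_sub_iff_add_eq, eq_div_iff hd.ne']; linarith
  · intro i
    have h1 := (Finset.sum_eq_sum_iff_of_le hle).1 (by rw [← Finset.mul_sum]; exact heq) i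
      (Finset.mem_univ i)
    rw [Fin.sum_univ_two] at h1
    have h2 := hx i
    rcases le_total 0 (wt Λ i) with h | h
    · rw [abs_of_nonneg h] at h1
      rw [max_eq_left h, max_eq_right (by linarith)]
      constructor <;> linarith
    · rw [abs_of_nonpos h] at h1
      rw [max_eq_right h, max_eq_left (by linarith)]
      constructor <;> linarith

lemma not_supp_neg {A : (Fin d → Fin 2) → Bool} (hA : IsExtremal A) {w : Fin d → ℝ}
    (hw : ∀ α, A α = true → 1 ≤ sval w (toS α)) (β : Fin d → Fin 2) (hβ : A β = false) :
    sval w (toS β) < 0 := by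
  obtain ⟨k, k0, kA, kh⟩ := hA.2 β hβ
  by_contra hcon
  push Not at hcon
  have hz : ∑ α, k α * sval w (toS α) = 0 := by
    have := fiber_sum k (fun i j => if j = 1 then w i else - w i)
    simp only [kh, mul_one] at this
    simp only [sval_toS]
    rw [this]
    apply Finset.sum_eq_zero
    intro i _
    simp [Fin.sum_univ_two]
  have kz : ∀ α, α ≠ β → A α = false → k α = 0 := fun α h1 h2 => kA α (by simp [addEntry, h1, h2])
  have hnn : ∀ α ∈ Finset.univ, 0 ≤ k α * sval w (toS α) := by
    intro α _
    by_cases h : α = β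
    · rw [h]; exact mul_nonneg (k0 β) hcon
    · cases h2 : A α with
      | true => exact mul_nonneg (k0 α) (by linarith [hw α h2])
      | false => rw [kz α h h2, zero_mul]
  have hall := (Finset.sum_eq_zero_iff_of_nonneg hnn).1 hz
  have hk : ∀ α, α ≠ β → k α = 0 := by
    intro α h
    cases h2 : A α with
    | true =>
      rcases mul_eq_zero.1 (hall α (Finset.mem_univ α)) with h3 | h3
      · exact h3
      · linarith [hw α h2]
    | false => exact kz α h h2
  have i0 : Fin d := ⟨0, extremal_pos hA⟩
  obtain ⟨j, hj⟩ : ∃ j : Fin 2, β i0 ≠ j := ⟨1 - β i0, by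
    generalize β i0 = t
    fin_cases t <;> simp⟩
  have h1 := kh i0 j
  have h2 : hypSum k i0 j = 0 := by
    apply Finset.sum_eq_zero
    intro α hα
    apply hk
    rintro rfl
    exact hj (Finset.mem_filter.1 hα).2
  linarith
end cover

theorem stmt_aux {d : ℕ} (A : (Fin d → Fin 2) → Bool) (hA : IsExtremal A)
    (Λ₀ : Fin d → Fin 2 → ℝ) (h0 : IsOptimalCover A Λ₀)
    (u v : ℝ) (huv : ∀ i j, 0 < Λ₀ i j → (Λ₀ i j = u ∨ Λ₀ i j = v)) :
    (∀ Λ : Fin d → Fin 2 → ℝ, IsOptimalCover A Λ → Λ = Λ₀) ∧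
    (∃ q : ℕ, 0 < q ∧ 2 - coverWeight Λ₀ = 1 / (q : ℝ)) ∧
    ∀ i j, ∃ m : ℤ, Λ₀ i j = (m : ℝ) * (2 - coverWeight Λ₀) := by
  have hlt := optimal_lt_two hA h0
  have hd : 0 < 2 - coverWeight Λ₀ := by linarith
  obtain ⟨hT, hst⟩ := opt_struct hlt h0
  have hfeas := opt_feas hlt h0.1
  have hneg := not_supp_neg hA hfeas
  set w := wt Λ₀ with hw
  have hsv : ∀ S : Finset (Fin d), sval w Sᶜ = - sval w S := by
    intro S
    have := Finset.sum_add_sum_compl S w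
    rw [sval, sval]; linarith
  have hcompl : ∀ S : Finset (Fin d), sval w S < 0 → 1 ≤ sval w Sᶜ := by
    intro S hS
    obtain ⟨α, hα⟩ := toS_surj Sᶜ
    rw [← hα]
    cases h : A α with
    | true => exact hfeas α h
    | false =>
      have := hneg α h
      rw [hα, hsv] at this
      linarith
  have H1 : ∀ S, 1 ≤ sval w S ∨ sval w S ≤ -1 := by
    intro S
    obtain ⟨α, rfl⟩ := toS_surj S
    cases h : A α with
    | true => exact Or.inl (hfeas α h)
    | false =>
      right
      have := hcompl _ (hneg α h)
      rw [hsv] at this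
      linarith
  have hto : ∀ w' : Fin d → ℝ, (∀ S, 1 ≤ sval w S → 1 ≤ sval w' S) →
      ∀ α, A α = true → 1 ≤ sval w' (toS α) := fun w' hf α hα => hf _ (hfeas α hα)
  have hfrom : ∀ w' : Fin d → ℝ, (∀ α, A α = true → 1 ≤ sval w' (toS α)) →
      (∀ S, 1 ≤ sval w S → 1 ≤ sval w' S) := by
    intro w' hf S hS
    obtain ⟨α, rfl⟩ := toS_surj S
    cases h : A α with
    | true => exact hf α h
    | false => linarith [hneg α h]
  obtain ⟨⟨S, hS⟩, hint, huniq⟩ := core_general (w := w)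
    (a := u / (2 - coverWeight Λ₀)) (b := v / (2 - coverWeight Λ₀))
    (by
      intro i hi
      obtain ⟨e1, e0⟩ := hst i
      rw [eq_div_iff hd.ne', eq_div_iff hd.ne']
      rcases lt_or_gt_of_ne hi with h | h
      · rw [max_eq_left (by linarith)] at e0
        have := huv i 0 (by rw [e0]; exact mul_pos hd (by linarith))
        rw [abs_of_neg h, mul_comm, ← e0]; exact this
      · rw [max_eq_left h.le] at e1
        have := huv i 1 (by rw [e1]; exact mul_pos hd h)
        rw [abs_of_pos h, mul_comm, ← e1]; exact this)
    H1 (fun w' hf => by rw [hT]; exact opt_min hlt h0 w' (hto w' hf))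
  refine ⟨?_, ?_, ?_⟩
  · intro Λ hΛ
    have hweq : coverWeight Λ = coverWeight Λ₀ :=
      le_antisymm (hΛ.2 _ h0.1) (h0.2 _ hΛ.1)
    have hlt' := optimal_lt_two hA hΛ
    obtain ⟨hT', hst'⟩ := opt_struct hlt' hΛ
    have hww := huniq (wt Λ) (hfrom _ (opt_feas hlt' hΛ.1)) (by rw [hT, hT', hweq])
    funext i j
    fin_cases j
    · simp only [Fin.zero_eta]
      rw [(hst i).2, (hst' i).2, hweq, hww]
    · simp only [Fin.mk_one]
      rw [(hst i).1, (hst' i).1, hweq, hww]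
  · choose m hm using hint
    have habs : ∑ i, |w i| = ((∑ i, |m i| : ℤ) : ℝ) := by
      push_cast
      exact Finset.sum_congr rfl fun i _ => by rw [hm i]
    have hodd : 2 ∣ (∑ i, |m i|) + 1 := by
      have h1 : 2 * ∑ i ∈ S, m i - ∑ i, m i = 1 := by
        rw [sval] at hS
        simp only [hm] at hS
        exact_mod_cast hS
      have h2 : (2 : ℤ) ∣ ∑ i, (|m i| - m i) := Finset.dvd_sum fun i _ => by
        rcases abs_choice (m i) with h | h <;> rw [h] <;> omega
      rw [Finset.sum_sub_distrib] at h2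
      omega
    obtain ⟨q, hq⟩ := hodd
    have hpos : 0 ≤ ∑ i, |m i| := Finset.sum_nonneg fun _ _ => abs_nonneg _
    have hqpos : 0 < q := by omega
    lift q to ℕ using hqpos.le
    refine ⟨q, by exact_mod_cast hqpos, ?_⟩
    have hqR : (0 : ℝ) < q := by exact_mod_cast hqpos
    have h3 : ((∑ i, |m i| : ℤ) : ℝ) + 1 = 2 * q := by exact_mod_cast hq
    rw [← habs, hT, sub_add_cancel, div_eq_iff hd.ne'] at h3
    rw [eq_div_iff hqR.ne']
    linarith
  · intro i j
    obtain ⟨m, hm⟩ := hint i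
    obtain ⟨e1, e0⟩ := hst i
    fin_cases j
    · refine ⟨max (-m) 0, ?_⟩
      simp only [Fin.zero_eta]
      rw [e0, hm]; push_cast; ring
    · refine ⟨max m 0, ?_⟩
      simp only [Fin.mk_one]
      rw [e1, hm]; push_cast; ring

/-- For an extremal matrix of order 2 of diversity at most 2: the deficiency is 1/q,
the optimal hyperplane cover is unique, and all of its entries are integer multiples of the
deficiency. -/
theorem stmt_18 {d : ℕ} (A : (Fin d → Fin 2) → Bool) (hA : IsExtremal A)
    (hdiv : ∃ Λ₀ : Fin d → Fin 2 → ℝ, IsOptimalCover A Λ₀ ∧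
      ∃ u v : ℝ, ∀ i j, 0 < Λ₀ i j → (Λ₀ i j = u ∨ Λ₀ i j = v)) :
    (∀ W : ℝ, IsGreatest {W' | ∃ k, IsPolyplex A k W'} W →
      ∃ q : ℕ, 0 < q ∧ 2 - W = 1 / (q : ℝ)) ∧
    (∀ Λ Λ' : Fin d → Fin 2 → ℝ, IsOptimalCover A Λ → IsOptimalCover A Λ' → Λ = Λ') ∧
    (∀ W : ℝ, IsGreatest {W' | ∃ k, IsPolyplex A k W'} W →
      ∀ Λ : Fin d → Fin 2 → ℝ, IsOptimalCover A Λ →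
        ∀ i j, ∃ m : ℤ, Λ i j = (m : ℝ) * (2 - W)) := by
  obtain ⟨Λ₀, h0, u, v, huv⟩ := hdiv
  obtain ⟨h1, h2, h3⟩ := stmt_aux A hA Λ₀ h0 u v huv
  refine ⟨fun W hW => ?_, fun Λ Λ' hΛ hΛ' => (h1 Λ hΛ).trans (h1 Λ' hΛ').symm,
    fun W hW Λ hΛ => ?_⟩
  · rw [← optimal_eq h0 hW]; exact h2
  · rw [h1 Λ hΛ, ← optimal_eq h0 hW]; exact h3
end

section
/- A 2-dimensional (0,1)-matrix A of order n is extremal if and only if there exist a set S of rows and a set T of columns with |S| + |T| = n + 1 such that the set of zero entries of A is exactly S × T, i.e., A(i,j) = 0 ⟺ (i ∈ S and j ∈ T). (This characterization is equivalent to the König–Hall–Egerváry theorem.) -/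
open Finset

theorem aux_sum {n : ℕ} (k : (Fin 2 → Fin n) → ℝ) (p : Fin n → Fin n → Prop)
    [∀ i j, Decidable (p i j)] :
    ∑ α ∈ Finset.univ.filter (fun α : Fin 2 → Fin n => p (α 0) (α 1)), k α
      = ∑ i, ∑ j, if p i j then k ![i, j] else 0 := by
  rw [Finset.sum_filter, ← Fintype.sum_prod_type'
    (f := fun i j => if p i j then k ![i, j] else 0)]
  refine Fintype.sum_equiv (finTwoArrowEquiv (Fin n)) _ _ ?_
  intro α
  have h : α = ![α 0, α 1] := by
    ext i; fin_cases i <;> rfl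
  change _ = if p (α 0) (α 1) then k ![α 0, α 1] else 0
  rw [← h]

theorem aux_row {n : ℕ} (k : (Fin 2 → Fin n) → ℝ) (i : Fin n) :
    hypSum k 0 i = ∑ j, k ![i, j] := by
  unfold hypSum
  rw [aux_sum k (fun a _ => a = i)]
  rw [Finset.sum_comm]
  simp

theorem aux_col {n : ℕ} (k : (Fin 2 → Fin n) → ℝ) (j : Fin n) :
    hypSum k 1 j = ∑ i, k ![i, j] := by
  unfold hypSum
  rw [aux_sum k (fun _ b => b = j)]
  simp

theorem aux_poly {n : ℕ} (A : (Fin 2 → Fin n) → Bool) :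
    HasPolydiagonal A ↔ ∀ S T : Finset (Fin n),
      (∀ i ∈ S, ∀ j ∈ T, A ![i, j] = false) → S.card + T.card ≤ n := by
  classical
  constructor
  · rintro ⟨k, h0, hz, h1⟩ S T hST
    have hr : ∀ i, ∑ j, k ![i, j] = 1 := fun i => by rw [← aux_row]; exact h1 0 i
    have hc : ∀ j, ∑ i, k ![i, j] = 1 := fun j => by rw [← aux_col]; exact h1 1 j
    have e1 : (S.card : ℝ) = ∑ i ∈ S, ∑ j ∈ Tᶜ, k ![i, j] := by
      rw [Finset.card_eq_sum_ones]
      push_cast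
      refine Finset.sum_congr rfl fun i hi => ?_
      rw [← hr i, ← Finset.sum_add_sum_compl T]
      rw [Finset.sum_eq_zero (s := T) (fun j hj => hz _ (hST i hi j hj)), zero_add]
    have e2 : (S.card : ℝ) ≤ (Tᶜ.card : ℝ) := by
      rw [e1, Finset.sum_comm, Finset.card_eq_sum_ones Tᶜ]
      push_cast
      refine Finset.sum_le_sum fun j _ => ?_
      rw [← hc j]
      exact Finset.sum_le_sum_of_subset_of_nonneg (Finset.subset_univ _) (fun i _ _ => h0 _)
    have e3 : S.card ≤ Tᶜ.card := by exact_mod_cast e2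
    have e4 := Finset.card_add_card_compl T
    rw [Fintype.card_fin] at e4
    omega
  · intro h
    obtain ⟨f, hf, hA⟩ := (Finset.all_card_le_biUnion_card_iff_exists_injective
      (fun i : Fin n => Finset.univ.filter (fun j : Fin n => A ![i, j] = true))).1 (by
        intro S
        set U := S.biUnion (fun i : Fin n => Finset.univ.filter (fun j : Fin n => A ![i, j] = true))
          with hU
        have := h S Uᶜ (by
          intro i hi j hj
          by_contra hc
          apply Finset.mem_compl.1 hj
          rw [hU, Finset.mem_biUnion]
          exact ⟨i, hi, by simpa using hc⟩)
        have e4 := Finset.card_add_card_compl U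
        rw [Fintype.card_fin] at e4
        omega)
    have hb : Function.Bijective f := Finite.injective_iff_bijective.1 hf
    refine ⟨fun α => if f (α 0) = α 1 then 1 else 0, ?_, ?_, ?_⟩
    · intro α
      dsimp only
      split_ifs <;> norm_num
    · intro α hα
      dsimp only
      rw [if_neg]
      intro he
      have := hA (α 0)
      have h' : α = ![α 0, α 1] := by
        ext i; fin_cases i <;> rfl
      rw [he, Finset.mem_filter, ← h', hα] at this
      simp at this
    · intro i j
      fin_cases i
      · change hypSum _ 0 j = 1
        rw [aux_row]
        simp
      · change hypSum _ 1 j = 1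
        rw [aux_col]
        obtain ⟨i, rfl⟩ := hb.2 j
        simp [hf.eq_iff]

theorem aux_add {n : ℕ} (A : (Fin 2 → Fin n) → Bool) (a b i j : Fin n) :
    addEntry A ![a, b] ![i, j] = false ↔ ¬ (i = a ∧ j = b) ∧ A ![i, j] = false := by
  have : (![i, j] : Fin 2 → Fin n) = ![a, b] ↔ (i = a ∧ j = b) := by
    constructor
    · intro h
      exact ⟨congrFun h 0, congrFun h 1⟩
    · rintro ⟨rfl, rfl⟩; rfl
  unfold addEntry
  rw [← this]
  split_ifs with h <;> simp [h]

/-- A 2-dimensional matrix of order n is extremal iff its zero entries form an S × T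
submatrix with |S| + |T| = n + 1 (the König–Hall–Egerváry theorem). -/
theorem stmt_19 {n : ℕ} (A : (Fin 2 → Fin n) → Bool) :
    IsExtremal A ↔ ∃ S T : Finset (Fin n), S.card + T.card = n + 1 ∧
      ∀ i j : Fin n, (A ![i, j] = false ↔ (i ∈ S ∧ j ∈ T)) := by
  classical
  have hle : ∀ S : Finset (Fin n), S.card ≤ n := fun S => by
    simpa using Finset.card_le_univ S
  constructor
  · rintro ⟨hn, hadd⟩
    rw [aux_poly] at hn
    push Not at hn
    obtain ⟨S, T, hz, hlt⟩ := hn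
    have hadd' : ∀ a b, A ![a, b] = false → ∀ S T : Finset (Fin n),
      (∀ i ∈ S, ∀ j ∈ T, ¬ (i = a ∧ j = b) ∧ A ![i, j] = false) → S.card + T.card ≤ n := by
      intro a b hab S T hST
      refine (aux_poly _).1 (hadd ![a, b] hab) S T ?_
      intro i hi j hj
      exact (aux_add A a b i j).2 (hST i hi j hj)
    refine ⟨S, T, ?_, ?_⟩
    · have hS := hle S
      have hT := hle T
      obtain ⟨a, ha⟩ := Finset.card_pos.1 (show 0 < S.card by omega)
      obtain ⟨b, hb⟩ := Finset.card_pos.1 (show 0 < T.card by omega)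
      have := hadd' a b (hz a ha b hb) (S.erase a) T (by
        intro i hi j hj
        rw [Finset.mem_erase] at hi
        exact ⟨fun h => hi.1 h.1, hz i hi.2 j hj⟩)
      rw [Finset.card_erase_of_mem ha] at this
      omega
    · intro a b
      refine ⟨fun hab => ?_, fun h => hz a h.1 b h.2⟩
      by_contra hc
      have := hadd' a b hab S T (by
        intro i hi j hj
        refine ⟨?_, hz i hi j hj⟩
        rintro ⟨rfl, rfl⟩
        exact hc ⟨hi, hj⟩)
      omega
  · rintro ⟨S, T, hc, hA⟩
    refine ⟨fun h => ?_, fun β hβ => ?_⟩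
    · have := (aux_poly A).1 h S T (fun i hi j hj => (hA i j).2 ⟨hi, hj⟩)
      omega
    · have h' : β = ![β 0, β 1] := by
        ext i; fin_cases i <;> rfl
      generalize β 0 = a at h'
      generalize β 1 = b at h'
      subst h'
      obtain ⟨ha, hb⟩ := (hA a b).1 hβ
      rw [aux_poly]
      intro S' T' hz
      simp only [aux_add, hA] at hz
      have hS' := hle S'
      have hT' := hle T'
      rcases S'.eq_empty_or_nonempty with rfl | ⟨s, hs⟩
      · simpa using hT'
      rcases T'.eq_empty_or_nonempty with rfl | ⟨t, ht⟩
      · simpa using hS'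
      have hSS : S' ⊆ S := fun i hi => (hz i hi t ht).2.1
      have hTT : T' ⊆ T := fun j hj => (hz s hs j hj).2.2
      have c1 := Finset.card_le_card hSS
      have c2 := Finset.card_le_card hTT
      by_cases hi : a ∈ S'
      · have hj : b ∉ T' := fun hj => (hz a hi b hj).1 ⟨rfl, rfl⟩
        have := Finset.card_lt_card (Finset.ssubset_iff_subset_ne.2 ⟨hTT, fun e => hj (e ▸ hb)⟩)
        omega
      · have := Finset.card_lt_card (Finset.ssubset_iff_subset_ne.2 ⟨hSS, fun e => hi (e ▸ ha)⟩)
        omega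
end
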